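/- Let J₁ be a closed subinterval of (a₁,b₁), suppose μ₁ is absolutely continuous in an open neighborhood of J₁ with density μ₁′ ≥ c > 0 there, and suppose C₂ > 0 is such that λ_{j,2n}^{(1)} ≤ C₂/n whenever x_{j,2n} ∈ J₁. Then for all n ≥ 3 and all 2 ≤ j ≤ n − 1 with x_{j,2n}, x_{j+1,2n} ∈ J₁, one has x_{j+1,2n} − x_{j,2n} ≤ 2C₂/(c n). -/

import Mathlib

open MeasureTheory

/-- The data of the diagonal type II multiple orthogonal polynomial for an
Angelesco system with two intervals: its `2n` zeros, listed in increasing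
order, with `n` of them in `(a₁,b₁)` and `n` of them in `(a₂,b₂)`, and the
multiple orthogonality conditions. -/
structure Angelesco (μ₁ μ₂ : Measure ℝ) (a₁ b₁ a₂ b₂ : ℝ) (n : ℕ) where
  x : Fin (2 * n) → ℝ
  mono : StrictMono x
  mem1 : ∀ i : Fin (2 * n), (i : ℕ) < n → x i ∈ Set.Ioo a₁ b₁
  mem2 : ∀ i : Fin (2 * n), n ≤ (i : ℕ) → x i ∈ Set.Ioo a₂ b₂
  orth1 : ∀ k < n, ∫ t, (∏ i, (t - x i)) * t ^ k ∂μ₁ = 0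
  orth2 : ∀ k < n, ∫ t, (∏ i, (t - x i)) * t ^ k ∂μ₂ = 0

/-- The quadrature weight `λ_{k,2n}^{(μ)} = ∫ ℓ_{k,2n} dμ`, where `ℓ_{k,2n}` is the
`k`-th fundamental Lagrange polynomial for the nodes `x_{1,2n} < ⋯ < x_{2n,2n}`. -/
noncomputable def qweight {μ₁ μ₂ : Measure ℝ} {a₁ b₁ a₂ b₂ : ℝ} {n : ℕ}
    (ad : Angelesco μ₁ μ₂ a₁ b₁ a₂ b₂ n) (μ : Measure ℝ) (k : Fin (2 * n)) : ℝ :=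
  ∫ t, (Lagrange.basis Finset.univ ad.x k).eval t ∂μ

/-!
Let `u < v` be consecutive nodes in the first interval. The polynomial `w = q D²`, where `q` has the
nodes of the second interval as zeros and `D` the other nodes of the first interval, is nonnegative
on the support of `μ₁`. On `[u, v]` it is a product of nonnegative affine functions, hence
log-concave. Multiplying it by the square of a suitable affine function, which keeps it log-concave,
we get a polynomial `f` with `f(u) = f(v) = 1`, so that `f ≥ 1` on all of `[u, v]`. Since `f` has
degree at most `3n - 2`, the quadrature rule is exact for it, and `f` vanishes at all nodes other
than `u` and `v`. Therefore `c (v - u) ≤ μ₁ [u, v] ≤ ∫ f dμ₁ = λ_u + λ_v ≤ 2 C₂ / n`.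
-/

section LogConcave

variable {E : Type*} [AddCommMonoid E] [Module ℝ E] {S : Set E} {f g : E → ℝ}

/-- Log-concavity of a nonnegative function on a convex set. It is expressed by powers instead of
logarithms because the function may have zeros, where `Real.log` has a junk value. -/
def LogConcaveOn (S : Set E) (f : E → ℝ) : Prop :=
  Convex ℝ S ∧ (∀ x ∈ S, 0 ≤ f x) ∧
    ∀ ⦃x⦄, x ∈ S → ∀ ⦃y⦄, y ∈ S → ∀ ⦃a b : ℝ⦄, 0 ≤ a → 0 ≤ b → a + b = 1 →
      f x ^ a * f y ^ b ≤ f (a • x + b • y)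

theorem logConcaveOn_of_concaveOn (hf : ConcaveOn ℝ S f) (hf₀ : ∀ x ∈ S, 0 ≤ f x) :
    LogConcaveOn S f :=
  ⟨hf.1, hf₀, fun x hx y hy _ _ ha hb hab =>
    (Real.geom_mean_le_arith_mean2_weighted ha hb (hf₀ x hx) (hf₀ y hy) hab).trans
      (hf.2 hx hy ha hb hab)⟩

theorem LogConcaveOn.mul (hf : LogConcaveOn S f) (hg : LogConcaveOn S g) :
    LogConcaveOn S (fun x => f x * g x) := by
  obtain ⟨hS, hf₀, hf⟩ := hf
  obtain ⟨-, hg₀, hg⟩ := hg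
  refine ⟨hS, fun x hx => mul_nonneg (hf₀ x hx) (hg₀ x hx), fun x hx y hy a b ha hb hab => ?_⟩
  calc (f x * g x) ^ a * (f y * g y) ^ b
      = (f x ^ a * f y ^ b) * (g x ^ a * g y ^ b) := by
        rw [Real.mul_rpow (hf₀ x hx) (hg₀ x hx), Real.mul_rpow (hf₀ y hy) (hg₀ y hy),
          mul_mul_mul_comm]
    _ ≤ f (a • x + b • y) * g (a • x + b • y) :=
        mul_le_mul (hf hx hy ha hb hab) (hg hx hy ha hb hab)
          (mul_nonneg (Real.rpow_nonneg (hg₀ x hx) a) (Real.rpow_nonneg (hg₀ y hy) b))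
          (hf₀ _ (hS hx hy ha hb hab))

theorem logConcaveOn_prod {ι : Type*} {s : Finset ι} {f : ι → E → ℝ} (hS : Convex ℝ S)
    (hf : ∀ i ∈ s, LogConcaveOn S (f i)) : LogConcaveOn S (fun x => ∏ i ∈ s, f i x) := by
  induction s using Finset.cons_induction with
  | empty =>
    simpa only [Finset.prod_empty] using
      logConcaveOn_of_concaveOn (concaveOn_const (1 : ℝ) hS) fun _ _ => zero_le_one
  | cons i s hi ih =>
    rw [Finset.forall_mem_cons] at hf
    simpa only [Finset.prod_cons] using hf.1.mul (ih hf.2)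

theorem LogConcaveOn.quasiconcaveOn (hf : LogConcaveOn S f) : QuasiconcaveOn ℝ S f := by
  obtain ⟨hS, hf₀, hf⟩ := hf
  rintro r x ⟨hx, hrx⟩ y ⟨hy, hry⟩ a b ha hb hab
  refine ⟨hS hx hy ha hb hab, ?_⟩
  rcases le_or_gt r 0 with hr | hr
  · exact hr.trans (hf₀ _ (hS hx hy ha hb hab))
  · calc r = r ^ a * r ^ b := by rw [← Real.rpow_add hr, hab, Real.rpow_one]
      _ ≤ f x ^ a * f y ^ b := mul_le_mul (Real.rpow_le_rpow hr.le hrx ha)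
          (Real.rpow_le_rpow hr.le hry hb) (Real.rpow_nonneg hr.le b)
          (Real.rpow_nonneg (hf₀ x hx) a)
      _ ≤ f (a • x + b • y) := hf hx hy ha hb hab

end LogConcave

theorem logConcaveOn_const_sub {u v y : ℝ} (hy : v ≤ y) :
    LogConcaveOn (Set.Icc u v) (fun t => y - t) :=
  logConcaveOn_of_concaveOn
    ((concaveOn_const y (convex_Icc u v)).sub (convexOn_id (convex_Icc u v)))
    fun _ ht => sub_nonneg.2 (ht.2.trans hy)

theorem logConcaveOn_sub_const {u v y : ℝ} (hy : y ≤ u) :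
    LogConcaveOn (Set.Icc u v) (fun t => t - y) :=
  logConcaveOn_of_concaveOn
    ((concaveOn_id (convex_Icc u v)).sub (convexOn_const y (convex_Icc u v)))
    fun _ ht => sub_nonneg.2 (hy.trans ht.1)

theorem logConcaveOn_sub_sq {u v y : ℝ} (hy : y ≤ u ∨ v ≤ y) :
    LogConcaveOn (Set.Icc u v) (fun t => (t - y) ^ 2) := by
  rcases hy with hy | hy
  · simpa only [sq] using (logConcaveOn_sub_const hy).mul (logConcaveOn_sub_const hy)
  · simpa only [sub_sq_comm _ y, sq] using
      (logConcaveOn_const_sub hy).mul (logConcaveOn_const_sub hy)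

section GapPolynomial

open Polynomial

theorem exists_natDegree_le_one_and_one_le_eval_mul_sq {w : ℝ[X]} {u v : ℝ} (huv : u < v)
    (hw : LogConcaveOn (Set.Icc u v) (fun t => w.eval t))
    (hwu : 0 < w.eval u) (hwv : 0 < w.eval v) :
    ∃ m : ℝ[X], m.natDegree ≤ 1 ∧ (w * m ^ 2).eval u = 1 ∧ (w * m ^ 2).eval v = 1 ∧
      ∀ t ∈ Set.Icc u v, 1 ≤ (w * m ^ 2).eval t := by
  have hd : v - u ≠ 0 := (sub_pos.2 huv).ne'
  set α := (√(w.eval u) * (v - u))⁻¹ with hα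
  set β := (√(w.eval v) * (v - u))⁻¹ with hβ
  have hα₀ : 0 ≤ α := inv_nonneg.2 (mul_nonneg (Real.sqrt_nonneg _) (sub_pos.2 huv).le)
  have hβ₀ : 0 ≤ β := inv_nonneg.2 (mul_nonneg (Real.sqrt_nonneg _) (sub_pos.2 huv).le)
  set m : ℝ[X] := C α * (C v - X) + C β * (X - C u)
  have eval_m (t : ℝ) : m.eval t = α * (v - t) + β * (t - u) := by simp [m]
  have eval_u : (w * m ^ 2).eval u = 1 := by
    rw [eval_mul, eval_pow, eval_m, sub_self, mul_zero, add_zero, hα]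
    field_simp
    exact (Real.sq_sqrt hwu.le).symm
  have eval_v : (w * m ^ 2).eval v = 1 := by
    rw [eval_mul, eval_pow, eval_m, sub_self, mul_zero, zero_add, hβ]
    field_simp
    exact (Real.sq_sqrt hwv.le).symm
  have hm : LogConcaveOn (Set.Icc u v) (fun t => m.eval t) := by
    simp only [eval_m]
    refine logConcaveOn_of_concaveOn ⟨convex_Icc u v, fun x _ y _ a b _ _ hab => ?_⟩
      fun t ht => add_nonneg (mul_nonneg hα₀ (sub_nonneg.2 ht.2))
        (mul_nonneg hβ₀ (sub_nonneg.2 ht.1))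
    simp only [smul_eq_mul]
    linear_combination (α * v - β * u) * hab
  have hf : LogConcaveOn (Set.Icc u v) (fun t => (w * m ^ 2).eval t) := by
    simpa only [eval_mul, sq] using hw.mul (hm.mul hm)
  refine ⟨m, by simp only [m]; compute_degree, eval_u, eval_v, fun t ht => ?_⟩
  exact ((hf.quasiconcaveOn 1).ordConnected.out ⟨Set.left_mem_Icc.2 huv.le, eval_u.ge⟩
    ⟨Set.right_mem_Icc.2 huv.le, eval_v.ge⟩ ht).2

variable {ι : Type*} {R D : Finset ι} {x : ι → ℝ}

/-- The polynomial `∏_{k ∈ R} (x k - X) * ∏_{k ∈ D} (X - x k)²`. Here `R` indexes nodes to the right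
of the support of a measure and `D` the nodes inside it that do not bound the gap under
consideration, so that the polynomial is nonnegative on the support and positive on the gap. -/
noncomputable def gapPolynomial (R D : Finset ι) (x : ι → ℝ) : ℝ[X] :=
  (∏ k ∈ R, (C (x k) - X)) * Lagrange.nodal D x ^ 2

theorem eval_gapPolynomial (t : ℝ) :
    (gapPolynomial R D x).eval t = (∏ k ∈ R, (x k - t)) * ∏ k ∈ D, (t - x k) ^ 2 := by
  simp [gapPolynomial, eval_prod, Lagrange.eval_nodal, Finset.prod_pow]

theorem natDegree_gapPolynomial_le : (gapPolynomial R D x).natDegree ≤ R.card + 2 * D.card := by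
  refine natDegree_mul_le.trans (add_le_add ?_ ?_)
  · calc (∏ k ∈ R, (C (x k) - X)).natDegree
        ≤ ∑ k ∈ R, (C (x k) - X).natDegree := natDegree_prod_le _ _
      _ ≤ R.card • 1 := Finset.sum_le_card_nsmul _ _ 1 fun k _ => by compute_degree
      _ = R.card := by simp
  · exact natDegree_pow_le.trans_eq (by rw [Lagrange.natDegree_nodal])

theorem eval_gapPolynomial_nonneg {t : ℝ} (ht : ∀ k ∈ R, t ≤ x k) :
    0 ≤ (gapPolynomial R D x).eval t := by
  rw [eval_gapPolynomial]
  exact mul_nonneg (Finset.prod_nonneg fun k hk => sub_nonneg.2 (ht k hk))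
    (Finset.prod_nonneg fun k _ => sq_nonneg _)

theorem eval_gapPolynomial_pos {t : ℝ} (hR : ∀ k ∈ R, t < x k) (hD : ∀ k ∈ D, t ≠ x k) :
    0 < (gapPolynomial R D x).eval t := by
  rw [eval_gapPolynomial]
  exact mul_pos (Finset.prod_pos fun k hk => sub_pos.2 (hR k hk))
    (Finset.prod_pos fun k hk => sq_pos_of_ne_zero (sub_ne_zero.2 (hD k hk)))

theorem eval_gapPolynomial_node {k : ι} (hk : k ∈ R ∨ k ∈ D) :
    (gapPolynomial R D x).eval (x k) = 0 := by
  rw [eval_gapPolynomial]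
  rcases hk with hk | hk
  · rw [Finset.prod_eq_zero hk (sub_self _), zero_mul]
  · rw [Finset.prod_eq_zero hk (by rw [sub_self, sq, zero_mul]), mul_zero]

theorem logConcaveOn_gapPolynomial {u v : ℝ} (hR : ∀ k ∈ R, v ≤ x k)
    (hD : ∀ k ∈ D, x k ≤ u ∨ v ≤ x k) :
    LogConcaveOn (Set.Icc u v) (fun t => (gapPolynomial R D x).eval t) := by
  simp only [eval_gapPolynomial]
  exact (logConcaveOn_prod (convex_Icc u v) fun k hk => logConcaveOn_const_sub (hR k hk)).mul
    (logConcaveOn_prod (convex_Icc u v) fun k hk => logConcaveOn_sub_sq (hD k hk))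

end GapPolynomial

section Quadrature

open Polynomial

variable {μ : Measure ℝ}

theorem integrable_polynomial_eval (hμ : ∀ k : ℕ, Integrable (fun t : ℝ => t ^ k) μ) (p : ℝ[X]) :
    Integrable (fun t => p.eval t) μ := by
  simp only [eval_eq_sum_range]
  exact integrable_finsetSum _ fun k _ => (hμ k).const_mul _

theorem integral_eval_mul_eq_zero_of_natDegree_lt {p q : ℝ[X]} {d : ℕ}
    (hμ : ∀ k : ℕ, Integrable (fun t : ℝ => t ^ k) μ)
    (horth : ∀ k < d, ∫ t, p.eval t * t ^ k ∂μ = 0) (hq : q.natDegree < d) :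
    ∫ t, (p * q).eval t ∂μ = 0 := by
  have expand (t : ℝ) :
      (p * q).eval t = ∑ k ∈ Finset.range d, q.coeff k * (p.eval t * t ^ k) := by
    rw [eval_mul, eval_eq_sum_range' hq, Finset.mul_sum]
    exact Finset.sum_congr rfl fun k _ => mul_left_comm _ _ _
  have integrable_term (k : ℕ) : Integrable (fun t => p.eval t * t ^ k) μ :=
    (integrable_polynomial_eval hμ (p * X ^ k)).congr (ae_of_all μ fun t => by simp)
  simp only [expand]
  rw [integral_finsetSum _ fun k _ => (integrable_term k).const_mul _]
  refine Finset.sum_eq_zero fun k hk => ?_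
  rw [integral_const_mul, horth k (Finset.mem_range.1 hk), mul_zero]

variable {ι : Type*} [DecidableEq ι] {s : Finset ι} {x : ι → ℝ}

theorem integral_eval_eq_sum_of_degree_lt {p : ℝ[X]}
    (hμ : ∀ k : ℕ, Integrable (fun t : ℝ => t ^ k) μ) (hx : Set.InjOn x s)
    (hp : p.degree < s.card) :
    ∫ t, p.eval t ∂μ = ∑ k ∈ s, p.eval (x k) * ∫ t, (Lagrange.basis s x k).eval t ∂μ := by
  have interpolation (t : ℝ) :
      p.eval t = ∑ k ∈ s, p.eval (x k) * (Lagrange.basis s x k).eval t := by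
    conv_lhs => rw [Lagrange.eq_interpolate hx hp]
    simp only [Lagrange.interpolate_apply, eval_finsetSum, eval_mul, eval_C]
  calc ∫ t, p.eval t ∂μ
      = ∫ t, ∑ k ∈ s, p.eval (x k) * (Lagrange.basis s x k).eval t ∂μ :=
        integral_congr_ae (ae_of_all μ interpolation)
    _ = ∑ k ∈ s, p.eval (x k) * ∫ t, (Lagrange.basis s x k).eval t ∂μ := by
        rw [integral_finsetSum _ fun k _ => (integrable_polynomial_eval hμ _).const_mul _]
        simp only [integral_const_mul]

theorem integral_eval_eq_sum_of_orthogonal {d : ℕ} {f : ℝ[X]}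
    (hμ : ∀ k : ℕ, Integrable (fun t : ℝ => t ^ k) μ) (hx : Set.InjOn x s)
    (horth : ∀ k < d, ∫ t, (Lagrange.nodal s x).eval t * t ^ k ∂μ = 0)
    (hf : f.natDegree < s.card + d) :
    ∫ t, f.eval t ∂μ = ∑ k ∈ s, f.eval (x k) * ∫ t, (Lagrange.basis s x k).eval t ∂μ := by
  set P := Lagrange.nodal s x
  have hPm : P.Monic := Lagrange.nodal_monic
  have hdiv : f %ₘ P + P * (f /ₘ P) = f := modByMonic_add_div f P
  have integral_quotient : ∫ t, (P * (f /ₘ P)).eval t ∂μ = 0 := by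
    rcases eq_or_ne (f /ₘ P) 0 with hQ | hQ
    · simp [hQ]
    · have hle : P.natDegree ≤ f.natDegree :=
        natDegree_le_natDegree (not_lt.1 (mt (divByMonic_eq_zero_iff hPm).2 hQ))
      refine integral_eval_mul_eq_zero_of_natDegree_lt hμ horth ?_
      rw [natDegree_divByMonic f hPm]
      rw [Lagrange.natDegree_nodal] at hle ⊢
      omega
  have eval_remainder {k : ι} (hk : k ∈ s) : (f %ₘ P).eval (x k) = f.eval (x k) := by
    conv_rhs => rw [← hdiv, eval_add, eval_mul, Lagrange.eval_nodal_at_node hk, zero_mul, add_zero]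
  calc ∫ t, f.eval t ∂μ
      = ∫ t, (f %ₘ P).eval t ∂μ + ∫ t, (P * (f /ₘ P)).eval t ∂μ := by
        rw [← integral_add (integrable_polynomial_eval hμ _) (integrable_polynomial_eval hμ _)]
        simp only [← eval_add, hdiv]
    _ = ∑ k ∈ s, (f %ₘ P).eval (x k) * ∫ t, (Lagrange.basis s x k).eval t ∂μ := by
        rw [integral_quotient, add_zero, integral_eval_eq_sum_of_degree_lt hμ hx]
        exact (degree_modByMonic_lt f hPm).trans_eq Lagrange.degree_nodal
    _ = ∑ k ∈ s, f.eval (x k) * ∫ t, (Lagrange.basis s x k).eval t ∂μ :=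
        Finset.sum_congr rfl fun k hk => by rw [eval_remainder hk]

end Quadrature

section GapMeasure

open Polynomial

variable {μ : Measure ℝ} {ι : Type*} [DecidableEq ι] {s T : Finset ι} {x : ι → ℝ} {i j : ι}

theorem exists_polynomial_one_le_on_gap (hT : T ⊆ s) (hx : Set.InjOn x T)
    (hi : i ∈ T) (hj : j ∈ T) (hij : x i < x j)
    (hgap : ∀ k ∈ T, x k ≤ x i ∨ x j ≤ x k) (hright : ∀ k ∈ s \ T, x j < x k) :
    ∃ f : ℝ[X], f.natDegree < s.card + T.card ∧ f.eval (x i) = 1 ∧ f.eval (x j) = 1 ∧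
      (∀ k ∈ s, k ≠ i ∧ k ≠ j → f.eval (x k) = 0) ∧
      (∀ t ∈ Set.Icc (x i) (x j), 1 ≤ f.eval t) ∧
      ∀ t, (∀ k ∈ s \ T, t ≤ x k) → 0 ≤ f.eval t := by
  set D := (T.erase i).erase j with hD
  have mem_D {k : ι} : k ∈ D ↔ k ≠ j ∧ k ≠ i ∧ k ∈ T := by simp [hD]
  have node_ne {k l : ι} (hk : k ∈ T) (hl : l ∈ T) (hkl : k ≠ l) : x l ≠ x k :=
    fun h => hkl (hx hk hl h.symm)
  set w := gapPolynomial (s \ T) D x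
  have eval_w_pos {l : ι} (hl : l ∈ T) (hlj : x l ≤ x j) (hlD : l ∉ D) : 0 < w.eval (x l) :=
    eval_gapPolynomial_pos (fun k hk => hlj.trans_lt (hright k hk)) fun k hk =>
      node_ne (mem_D.1 hk).2.2 hl fun hkl => hlD (hkl ▸ hk)
  obtain ⟨m, hm, eval_i, eval_j, one_le⟩ :=
    exists_natDegree_le_one_and_one_le_eval_mul_sq hij
      (logConcaveOn_gapPolynomial (fun k hk => (hright k hk).le)
        fun k hk => hgap k (mem_D.1 hk).2.2)
      (eval_w_pos hi hij.le fun h => (mem_D.1 h).2.1 rfl)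
      (eval_w_pos hj le_rfl fun h => (mem_D.1 h).1 rfl)
  refine ⟨w * m ^ 2, ?_, eval_i, eval_j, fun k hk ⟨hki, hkj⟩ => ?_, one_le, fun t ht => ?_⟩
  · have degree_f : (w * m ^ 2).natDegree ≤ ((s \ T).card + 2 * D.card) + 2 * 1 :=
      natDegree_mul_le.trans (add_le_add natDegree_gapPolynomial_le
        (natDegree_pow_le.trans (Nat.mul_le_mul_left 2 hm)))
    have card_D : D.card + 2 = T.card := by
      have hji : j ∈ T.erase i := Finset.mem_erase.2 ⟨ne_of_apply_ne x hij.ne', hj⟩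
      rw [← Finset.card_erase_add_one hi, ← Finset.card_erase_add_one hji]
    have card_sdiff : (s \ T).card + T.card = s.card := Finset.card_sdiff_add_card_eq_card hT
    omega
  · have hkRD : k ∈ s \ T ∨ k ∈ D :=
      (em (k ∈ T)).elim (fun hkT => .inr (mem_D.2 ⟨hkj, hki, hkT⟩))
        fun hkT => .inl (Finset.mem_sdiff.2 ⟨hk, hkT⟩)
    rw [eval_mul, eval_gapPolynomial_node hkRD, zero_mul]
  · rw [eval_mul, eval_pow]
    exact mul_nonneg (eval_gapPolynomial_nonneg ht) (sq_nonneg _)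

theorem measureReal_Icc_le_integral_basis_add
    (hμ : ∀ k : ℕ, Integrable (fun t : ℝ => t ^ k) μ) (hT : T ⊆ s) (hx : Set.InjOn x s)
    (horth : ∀ k < T.card, ∫ t, (Lagrange.nodal s x).eval t * t ^ k ∂μ = 0)
    (hi : i ∈ T) (hj : j ∈ T) (hij : x i < x j)
    (hgap : ∀ k ∈ T, x k ≤ x i ∨ x j ≤ x k) (hright : ∀ k ∈ s \ T, x j < x k)
    (hsupp : ∀ᵐ t ∂μ, ∀ k ∈ s \ T, t ≤ x k) :
    μ.real (Set.Icc (x i) (x j)) ≤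
      ∫ t, (Lagrange.basis s x i).eval t ∂μ + ∫ t, (Lagrange.basis s x j).eval t ∂μ := by
  obtain ⟨f, degree_f, eval_i, eval_j, eval_node, one_le, nonneg⟩ :=
    exists_polynomial_one_le_on_gap hT (hx.mono hT) hi hj hij hgap hright
  have integrable_one : Integrable (1 : ℝ → ℝ) μ := (hμ 0).congr (ae_of_all μ pow_zero)
  calc μ.real (Set.Icc (x i) (x j))
      = ∫ t, (Set.Icc (x i) (x j)).indicator 1 t ∂μ :=
        (integral_indicator_one measurableSet_Icc).symm
    _ ≤ ∫ t, f.eval t ∂μ := by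
        refine integral_mono_ae (integrable_one.indicator measurableSet_Icc)
          (integrable_polynomial_eval hμ f) ?_
        filter_upwards [hsupp] with t ht
        exact Set.indicator_apply_le' (one_le t) fun _ => nonneg t ht
    _ = ∑ k ∈ s, f.eval (x k) * ∫ t, (Lagrange.basis s x k).eval t ∂μ :=
        integral_eval_eq_sum_of_orthogonal hμ hx horth degree_f
    _ = ∫ t, (Lagrange.basis s x i).eval t ∂μ + ∫ t, (Lagrange.basis s x j).eval t ∂μ := by
        rw [Finset.sum_eq_add_of_mem i j (hT hi) (hT hj) (ne_of_apply_ne x hij.ne)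
          fun k hk hk' => by rw [eval_node k hk hk', zero_mul], eval_i, eval_j, one_mul, one_mul]

end GapMeasure

theorem Angelesco.measureReal_Icc_le_qweight_add {μ₁ μ₂ : Measure ℝ} {a₁ b₁ a₂ b₂ : ℝ} {n : ℕ}
    (A : Angelesco μ₁ μ₂ a₁ b₁ a₂ b₂ n) (hμ₁ : ∀ k : ℕ, Integrable (fun t : ℝ => t ^ k) μ₁)
    (hsupp : ∀ᵐ t ∂μ₁, t ≤ a₂) {i j : Fin (2 * n)} (hij : (j : ℕ) = i + 1) (hj : (j : ℕ) < n) :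
    μ₁.real (Set.Icc (A.x i) (A.x j)) ≤ qweight A μ₁ i + qweight A μ₁ j := by
  set T : Finset (Fin (2 * n)) := {k | (k : ℕ) < n} with hT
  have mem_compl {k : Fin (2 * n)} (hk : k ∈ Finset.univ \ T) : n ≤ (k : ℕ) := by
    simpa [hT] using hk
  have card_T : T.card = n := by
    rw [hT, Fin.card_filter_val_lt, min_eq_right (by omega)]
  refine measureReal_Icc_le_integral_basis_add (T := T) hμ₁ (Finset.subset_univ T)
    A.mono.injective.injOn ?_ ?_ ?_ (A.mono ?_) ?_ ?_ ?_
  · intro k hk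
    simpa only [Lagrange.eval_nodal] using A.orth1 k (card_T ▸ hk)
  · simp only [hT, Finset.mem_filter_univ]
    omega
  · simpa only [hT, Finset.mem_filter_univ] using hj
  · exact Fin.lt_def.2 (by omega)
  · intro k _
    simp only [A.mono.le_iff_le, Fin.le_def]
    omega
  · exact fun k hk => A.mono (Fin.lt_def.2 (hj.trans_le (mem_compl hk)))
  · filter_upwards [hsupp] with t ht k hk
    exact ht.trans (A.mem2 k (mem_compl hk)).1.le

theorem smul_restrict_le_of_restrict_eq_withDensity {α : Type*} [MeasurableSpace α]
    {μ ν : Measure α} {J U : Set α} {ρ : α → ENNReal} {c : ENNReal} (hU : MeasurableSet U)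
    (hJU : J ⊆ U) (hρ : μ.restrict U = (ν.restrict U).withDensity ρ) (hc : ∀ t ∈ U, c ≤ ρ t) :
    c • ν.restrict J ≤ μ :=
  calc c • ν.restrict J ≤ c • ν.restrict U := by gcongr
    _ = (ν.restrict U).withDensity fun _ => c := (withDensity_const c).symm
    _ ≤ (ν.restrict U).withDensity ρ := withDensity_mono (ae_restrict_of_forall_mem hU hc)
    _ = μ.restrict U := hρ.symm
    _ ≤ μ := Measure.restrict_le_self

theorem mul_sub_le_measureReal_Icc {μ : Measure ℝ} [IsFiniteMeasure μ] {c u v : ℝ} {J : Set ℝ}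
    (hc : 0 ≤ c) (hJ : Set.Icc u v ⊆ J) (hμ : ENNReal.ofReal c • volume.restrict J ≤ μ) :
    c * (v - u) ≤ μ.real (Set.Icc u v) := by
  refine (ENNReal.ofReal_le_iff_le_toReal (measure_ne_top μ _)).1 ?_
  calc ENNReal.ofReal (c * (v - u)) = ENNReal.ofReal c * volume (Set.Icc u v) := by
        rw [ENNReal.ofReal_mul hc, Real.volume_Icc]
    _ = (ENNReal.ofReal c • volume.restrict J) (Set.Icc u v) := by
        rw [Measure.smul_apply, smul_eq_mul, Measure.restrict_eq_self _ hJ]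
    _ ≤ μ (Set.Icc u v) := hμ _

theorem angelesco_node_spacing_upper_bound_general {μ₁ μ₂ : Measure ℝ} {a₁ b₁ a₂ b₂ : ℝ}
    (hμ₁ : ∀ k : ℕ, Integrable (fun t : ℝ => t ^ k) μ₁) (hsupp : ∀ᵐ t ∂μ₁, t ≤ a₂)
    {c₀ d₀ c : ℝ} (hc : 0 < c)
    (hdens : ENNReal.ofReal c • volume.restrict (Set.Icc c₀ d₀) ≤ μ₁)
    {n : ℕ} (A : Angelesco μ₁ μ₂ a₁ b₁ a₂ b₂ n) {C₂ : ℝ}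
    (hwt : ∀ j : Fin (2 * n), A.x j ∈ Set.Icc c₀ d₀ → qweight A μ₁ j ≤ C₂ / n)
    {i j : Fin (2 * n)} (hij : (j : ℕ) = i + 1) (hj : (j : ℕ) < n)
    (hxi : A.x i ∈ Set.Icc c₀ d₀) (hxj : A.x j ∈ Set.Icc c₀ d₀) :
    A.x j - A.x i ≤ 2 * C₂ / (c * n) := by
  have : IsFiniteMeasure μ₁ := by
    simpa [integrable_const_iff_isFiniteMeasure (one_ne_zero (α := ℝ))] using hμ₁ 0
  have spacing : c * (A.x j - A.x i) ≤ C₂ / n + C₂ / n :=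
    calc c * (A.x j - A.x i)
        ≤ μ₁.real (Set.Icc (A.x i) (A.x j)) :=
          mul_sub_le_measureReal_Icc hc.le (Set.Icc_subset_Icc hxi.1 hxj.2) hdens
      _ ≤ qweight A μ₁ i + qweight A μ₁ j := A.measureReal_Icc_le_qweight_add hμ₁ hsupp hij hj
      _ ≤ C₂ / n + C₂ / n := add_le_add (hwt i hxi) (hwt j hxj)
  calc A.x j - A.x i ≤ (C₂ / n + C₂ / n) / c := (le_div_iff₀' hc).2 spacing
    _ = 2 * C₂ / (c * n) := by field_simp; ring

/-- **Upper bound on the spacing of the nodes:** if `μ₁` is absolutely continuous near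
`J₁ = [c₀,d₀] ⊆ (a₁,b₁)` with density `μ₁′ ≥ c > 0` there, and `C₂ > 0` is such that
`λ_{j,2n}^{(1)} ≤ C₂/n` whenever `x_{j,2n} ∈ J₁`, then for `n ≥ 3`, `2 ≤ ℓ ≤ n − 1`
and nodes `x_{ℓ,2n}, x_{ℓ+1,2n} ∈ J₁` one has `x_{ℓ+1,2n} − x_{ℓ,2n} ≤ 2C₂/(c n)`
(nodes are `1`-based, so `x_{ℓ,2n}` is `(ad n).x ⟨ℓ-1,_⟩`). -/
theorem angelesco_node_spacing_upper_bound
    (μ₁ μ₂ : Measure ℝ) [IsFiniteMeasure μ₁] [IsFiniteMeasure μ₂]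
    (a₁ b₁ a₂ b₂ : ℝ) (hab₁ : a₁ < b₁) (hgap : b₁ ≤ a₂) (hab₂ : a₂ < b₂)
    (hsupp₁ : μ₁ (Set.Icc a₁ b₁)ᶜ = 0) (hsupp₂ : μ₂ (Set.Icc a₂ b₂)ᶜ = 0)
    (hinf₁ : ∀ s : Finset ℝ, μ₁ ((s : Set ℝ))ᶜ ≠ 0)
    (hinf₂ : ∀ s : Finset ℝ, μ₂ ((s : Set ℝ))ᶜ ≠ 0)
    (hmom₁ : ∀ k : ℕ, Integrable (fun t : ℝ => t ^ k) μ₁)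
    (hmom₂ : ∀ k : ℕ, Integrable (fun t : ℝ => t ^ k) μ₂)
    (c₀ d₀ : ℝ) (hc₀d₀ : c₀ ≤ d₀) (hJ : Set.Icc c₀ d₀ ⊆ Set.Ioo a₁ b₁)
    (c : ℝ) (hc : 0 < c)
    (hac : ∃ U : Set ℝ, IsOpen U ∧ Set.Icc c₀ d₀ ⊆ U ∧
      ∃ ρ : ℝ → ENNReal, μ₁.restrict U = (volume.restrict U).withDensity ρ ∧
        ∀ t ∈ U, ENNReal.ofReal c ≤ ρ t)
    (C₂ : ℝ) (hC₂ : 0 < C₂)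
    (ad : ∀ n : ℕ, Angelesco μ₁ μ₂ a₁ b₁ a₂ b₂ n)
    (hwt : ∀ (n : ℕ) (j : Fin (2 * n)), (ad n).x j ∈ Set.Icc c₀ d₀ →
      qweight (ad n) μ₁ j ≤ C₂ / n) :
    ∀ (n : ℕ) (hn : 3 ≤ n) (ℓ : ℕ) (hℓ₁ : 2 ≤ ℓ) (hℓ₂ : ℓ ≤ n - 1),
      (ad n).x ⟨ℓ - 1, by omega⟩ ∈ Set.Icc c₀ d₀ →
      (ad n).x ⟨ℓ, by omega⟩ ∈ Set.Icc c₀ d₀ →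
        (ad n).x ⟨ℓ, by omega⟩ - (ad n).x ⟨ℓ - 1, by omega⟩ ≤ 2 * C₂ / (c * n) := by
  obtain ⟨U, hU, hJU, ρ, hρ, hcρ⟩ := hac
  have hsupp : ∀ᵐ t ∂μ₁, t ≤ a₂ := by
    filter_upwards [mem_ae_iff.2 hsupp₁] with t ht using ht.2.trans hgap
  exact fun n _ ℓ _ _ => angelesco_node_spacing_upper_bound_general hmom₁ hsupp hc
    (smul_restrict_le_of_restrict_eq_withDensity hU.measurableSet hJU hρ hcρ) (ad n) (hwt n)
    (by simp only; omega) (by simp only; omega)
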